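/- The expected regret of Thompson sampling satisfies Σ_{t=1}^{T} E[ R(Y_{t,A*}) − R(Y_{t,A_t}) ] ≤ √( |𝒜| · H(A*) · T / 2 ). -/

import Mathlib

open MeasureTheory ProbabilityTheory Real

/-- Shannon entropy of a random variable `X` with values in a finite set,
under the measure `μ`. -/
noncomputable def entropy {Ω : Type*} [MeasurableSpace Ω] (μ : Measure Ω)
    {𝒳 : Type*} [Fintype 𝒳] (X : Ω → 𝒳) : ℝ :=
  ∑ x : 𝒳, Real.negMulLog (μ {ω | X ω = x}).toReal

/-!
Let `Δ_t` be the regret of period `t` given the past. Probability matching makes it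
`∑ a, P(A* = a) * (E[R(Y_a) | A* = a] - E[R(Y_a)])`. If `R` ranges in an interval of length `1`,
each difference is at most `√(D / 2)`, where `D` is the relative entropy of the law of `Y_a` given
`A* = a` with respect to its unconditional law. By Cauchy–Schwarz over the actions, `Δ_t ^ 2` is at
most `|𝒜| / 2` times the information about `A*` revealed in period `t`. The information gains
telescope to at most `H(A*)`, and Cauchy–Schwarz over the periods gives the bound.
-/

section KullbackLeibler

open InformationTheory

variable {α : Type*} [MeasurableSpace α] {μ ν : Measure α}
  [IsProbabilityMeasure μ] [IsProbabilityMeasure ν]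

-- The gap is the relative entropy of `μ` with respect to the exponential tilting of `ν` by `f`.
lemma integral_sub_log_integral_exp_le_klDiv {f : α → ℝ} (hfμ : Integrable f μ)
    (hfν : Integrable (fun x => exp (f x)) ν) (h : klDiv μ ν ≠ ⊤) :
    ∫ x, f x ∂μ - log (∫ x, exp (f x) ∂ν) ≤ (klDiv μ ν).toReal := by
  obtain ⟨hac, hllr⟩ := klDiv_ne_top_iff.mp h
  have : IsProbabilityMeasure (ν.tilted f) := isProbabilityMeasure_tilted hfν
  have htilted : 0 ≤ ∫ x, llr μ (ν.tilted f) x ∂μ := by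
    simpa using integral_llr_add_sub_measure_univ_nonneg
      (hac.trans (absolutelyContinuous_tilted hfν)) (integrable_llr_tilted_right hac hfμ hllr hfν)
  rw [integral_llr_tilted_right hac hfμ hfν hllr] at htilted
  rw [toReal_klDiv_of_measure_eq hac (by simp)]
  linarith

lemma cgf_sub_integral_le_of_mem_Icc {f : α → ℝ} {a b : ℝ} (hf : Measurable f)
    (hfab : ∀ x, f x ∈ Set.Icc a b) (s : ℝ) :
    cgf (fun x => f x - ∫ y, f y ∂ν) ν s ≤ (b - a) ^ 2 / 8 * s ^ 2 := by
  refine ((hasSubgaussianMGF_of_mem_Icc hf.aemeasurable (ae_of_all ν hfab)).cgf_le s).trans_eq ?_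
  simp only [NNReal.coe_pow, NNReal.coe_div, coe_nnnorm, norm_eq_abs, NNReal.coe_ofNat, div_pow,
    sq_abs]
  ring

/-- Optimising the variational bound for `s * (f - ν[f])` over `s` shows that a quadratic in `s`
is nonnegative; its discriminant is the claim. -/
lemma sq_integral_sub_integral_le_klDiv {f : α → ℝ} {a b : ℝ} (hf : Measurable f)
    (hfab : ∀ x, f x ∈ Set.Icc a b) (h : klDiv μ ν ≠ ⊤) :
    (∫ x, f x ∂μ - ∫ x, f x ∂ν) ^ 2 ≤ (b - a) ^ 2 / 2 * (klDiv μ ν).toReal := by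
  have hfμ : Integrable f μ := .of_mem_Icc a b hf.aemeasurable (ae_of_all μ hfab)
  have hquadratic (s : ℝ) : 0 ≤ (b - a) ^ 2 / 8 * (s * s) +
      -(∫ x, f x ∂μ - ∫ x, f x ∂ν) * s + (klDiv μ ν).toReal := by
    have hvar := integral_sub_log_integral_exp_le_klDiv (μ := μ)
      ((hfμ.sub (integrable_const (∫ y, f y ∂ν))).const_mul s)
      ((hasSubgaussianMGF_of_mem_Icc hf.aemeasurable (ae_of_all ν hfab)).integrable_exp_mul s) h
    have hcgf := cgf_sub_integral_le_of_mem_Icc (ν := ν) hf hfab s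
    have hmean : ∫ x, s * (f x - ∫ y, f y ∂ν) ∂μ = s * (∫ x, f x ∂μ - ∫ x, f x ∂ν) := by
      rw [integral_const_mul, integral_sub hfμ (integrable_const _)]
      simp
    simp only [Pi.sub_apply, hmean] at hvar
    simp only [cgf, mgf] at hcgf
    linarith
  have hdiscrim := discrim_le_zero hquadratic
  rw [discrim, neg_sq] at hdiscrim
  linarith

lemma toReal_klDiv_eq_sum [Fintype α] [MeasurableSingletonClass α] (hac : μ ≪ ν) :
    (klDiv μ ν).toReal = ∑ x, μ.real {x} * log (μ.real {x} / ν.real {x}) := by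
  rw [toReal_klDiv_of_measure_eq hac (by simp), integral_fintype .of_finite]
  refine Finset.sum_congr rfl fun x _ => ?_
  have hrnDeriv : μ.real {x} = (μ.rnDeriv ν x).toReal * ν.real {x} := by
    simp only [measureReal_def, ← Measure.setLIntegral_rnDeriv hac {x}, lintegral_singleton,
      ENNReal.toReal_mul]
  rcases eq_or_ne (μ.real {x}) 0 with hμ | hμ
  · simp [hμ]
  · rw [smul_eq_mul, llr_def,
      ← eq_div_of_mul_eq (right_ne_zero_of_mul (hrnDeriv ▸ hμ)) hrnDeriv.symm]

end KullbackLeibler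

section FiniteConditioning

variable {Ω 𝒳 : Type*} [MeasurableSpace Ω] {μ : Measure Ω} [IsFiniteMeasure μ]
  [Fintype 𝒳] [MeasurableSpace 𝒳] [MeasurableSingletonClass 𝒳]

lemma measureReal_mul_cond_real {s : Set Ω} (hs : MeasurableSet s) (t : Set Ω) :
    μ.real s * μ[|s].real t = μ.real (s ∩ t) := by
  simp only [measureReal_def, ← ENNReal.toReal_mul, ← cond_mul_eq_inter hs t μ, mul_comm]

lemma sum_measureReal_fiber_inter {X : Ω → 𝒳} (hX : Measurable X) (s : Set Ω) :
    ∑ x, μ.real (X ⁻¹' {x} ∩ s) = μ.real s := by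
  simpa [measureReal_restrict_apply, measurableSet_preimage hX] using
    sum_measureReal_preimage_singleton (μ := μ.restrict s) Finset.univ
      (fun x _ => hX (measurableSet_singleton x))

lemma sum_measureReal_fiber {Ω : Type*} [MeasurableSpace Ω] {μ : Measure Ω}
    [IsProbabilityMeasure μ] {X : Ω → 𝒳} (hX : Measurable X) :
    ∑ x, μ.real (X ⁻¹' {x}) = 1 := by
  simpa using sum_measureReal_fiber_inter (μ := μ) hX Set.univ

lemma integral_eq_sum_cond {E : Type*} [NormedAddCommGroup E] [NormedSpace ℝ E] {X : Ω → 𝒳}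
    (hX : Measurable X) {f : Ω → E} (hf : Integrable f μ) :
    ∫ ω, f ω ∂μ = ∑ x, μ.real (X ⁻¹' {x}) • ∫ ω, f ω ∂μ[|X ← x] := by
  conv_lhs => rw [← sum_meas_smul_cond_fiber hX μ]
  rw [integral_finsetSum_measure]
  · simp only [integral_smul_measure, measureReal_def]
  · intro x _
    rcases eq_or_ne (μ (X ⁻¹' {x})) 0 with hx | hx
    · simp [hx]
    · exact ((hf.mono_measure Measure.restrict_le_self).smul_measure
        (ENNReal.inv_ne_top.mpr hx)).smul_measure (measure_ne_top μ _)

lemma integral_eval_eq_sum_cond {E : Type*} [NormedAddCommGroup E] [NormedSpace ℝ E] {X : Ω → 𝒳}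
    (hX : Measurable X) {f : 𝒳 → Ω → E} (hf : Integrable (fun ω => f (X ω) ω) μ) :
    ∫ ω, f (X ω) ω ∂μ = ∑ x, μ.real (X ⁻¹' {x}) • ∫ ω, f x ω ∂μ[|X ← x] := by
  rw [integral_eq_sum_cond hX hf]
  refine Finset.sum_congr rfl fun x _ => congrArg _ (integral_congr_ae ?_)
  exact ae_cond_of_forall_mem (hX (measurableSet_singleton x)) fun ω hω => by
    simp only [Set.mem_preimage, Set.mem_singleton_iff] at hω
    simp only [hω]

lemma identDistrib_cond_of_indepFun {β γ : Type*} [MeasurableSpace β] [MeasurableSpace γ]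
    {X : Ω → β} {W : Ω → γ} (hX : Measurable X) (hW : Measurable W) (h : X ⟂ᵢ[μ] W)
    {s : Set β} (hs : MeasurableSet s) (hs0 : μ (X ⁻¹' s) ≠ 0) :
    IdentDistrib W W μ[|X in s] μ := by
  refine ⟨hW.aemeasurable, hW.aemeasurable, ?_⟩
  ext t ht
  rw [Measure.map_apply hW ht, Measure.map_apply hW ht, cond_apply (hX hs),
    h.measure_inter_preimage_eq_mul s t hs ht, ENNReal.inv_mul_cancel_left hs0 (measure_ne_top _ _)]

end FiniteConditioning

section ConditionalEntropy

variable {Ω 𝒳 𝒵 𝒲 : Type*} [MeasurableSpace Ω] {μ : Measure Ω}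
  [Fintype 𝒳] [Fintype 𝒵] [Fintype 𝒲]

/-- Conditional Shannon entropy `H(X | Z)` of finitely valued random variables; the values of `Z`
of probability `0` contribute `0`. -/
noncomputable def condEntropy (μ : Measure Ω) (X : Ω → 𝒳) (Z : Ω → 𝒵) : ℝ :=
  ∑ z, μ.real (Z ⁻¹' {z}) * entropy μ[|Z ← z] X

/-- Mutual information `I(X; Z)` of finitely valued random variables, in its form
`H(X) - H(X | Z)` as an expected loss of entropy. -/
noncomputable def mutualInfo (μ : Measure Ω) (X : Ω → 𝒳) (Z : Ω → 𝒵) : ℝ :=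
  entropy μ X - condEntropy μ X Z

lemma entropy_nonneg [IsZeroOrProbabilityMeasure μ] (X : Ω → 𝒳) : 0 ≤ entropy μ X :=
  Finset.sum_nonneg fun _ _ => negMulLog_nonneg measureReal_nonneg measureReal_le_one

lemma condEntropy_nonneg (X : Ω → 𝒳) (Z : Ω → 𝒵) : 0 ≤ condEntropy μ X Z :=
  Finset.sum_nonneg fun _ _ => mul_nonneg measureReal_nonneg (entropy_nonneg X)

lemma condEntropy_of_unique [Unique 𝒵] [IsProbabilityMeasure μ] (X : Ω → 𝒳) (Z : Ω → 𝒵) :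
    condEntropy μ X Z = entropy μ X := by
  have huniv : Z ⁻¹' {default} = Set.univ := Set.eq_univ_of_forall fun ω => Subsingleton.elim _ _
  simp [condEntropy, huniv]

lemma condEntropy_equiv_comp (X : Ω → 𝒳) (Z : Ω → 𝒵) (e : 𝒵 ≃ 𝒲) :
    condEntropy μ X (e ∘ Z) = condEntropy μ X Z := by
  have hfiber (z : 𝒵) : (e ∘ Z) ⁻¹' {e z} = Z ⁻¹' {z} := by ext; simp
  simp only [condEntropy, ← e.sum_comp, hfiber]

variable [MeasurableSpace 𝒵] [MeasurableSingletonClass 𝒵]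

lemma condEntropy_prodMk [MeasurableSpace 𝒲] [MeasurableSingletonClass 𝒲] [IsFiniteMeasure μ]
    (X : Ω → 𝒳) {Z : Ω → 𝒵} {W : Ω → 𝒲} (hZ : Measurable Z)
    (hW : Measurable W) :
    condEntropy μ X (fun ω => (Z ω, W ω)) =
      ∑ z, μ.real (Z ⁻¹' {z}) * condEntropy μ[|Z ← z] X W := by
  have hZ' (z : 𝒵) := hZ (measurableSet_singleton z)
  have hW' (w : 𝒲) := hW (measurableSet_singleton w)
  have hfiber (z : 𝒵) (w : 𝒲) :
      (fun ω => (Z ω, W ω)) ⁻¹' {(z, w)} = Z ⁻¹' {z} ∩ W ⁻¹' {w} := by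
    ext; simp
  simp only [condEntropy, Fintype.sum_prod_type, hfiber, Finset.mul_sum, ← mul_assoc,
    measureReal_mul_cond_real (hZ' _), cond_cond_eq_cond_inter (hZ' _) (hW' _)]

lemma sum_measureReal_mul_mutualInfo_cond [MeasurableSpace 𝒲] [MeasurableSingletonClass 𝒲]
    [IsFiniteMeasure μ] (X : Ω → 𝒳) {Z : Ω → 𝒵} {W : Ω → 𝒲} (hZ : Measurable Z)
    (hW : Measurable W) :
    ∑ z, μ.real (Z ⁻¹' {z}) * mutualInfo μ[|Z ← z] X W =
      condEntropy μ X Z - condEntropy μ X (fun ω => (Z ω, W ω)) := by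
  simp only [condEntropy_prodMk X hZ hW, mutualInfo, mul_sub, Finset.sum_sub_distrib]
  rfl

variable [MeasurableSpace 𝒳] [MeasurableSingletonClass 𝒳]

lemma condEntropy_congr_of_identDistrib {Ω' : Type*} [MeasurableSpace Ω'] {ν : Measure Ω'}
    {X : Ω → 𝒳} {Z : Ω → 𝒵} {X' : Ω' → 𝒳} {Z' : Ω' → 𝒵} (hZ : Measurable Z) (hZ' : Measurable Z')
    (h : IdentDistrib (fun ω => (X ω, Z ω)) (fun ω => (X' ω, Z' ω)) μ ν) :
    condEntropy μ X Z = condEntropy ν X' Z' := by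
  have hfiber (z : 𝒵) : μ (Z ⁻¹' {z}) = ν (Z' ⁻¹' {z}) :=
    h.measure_mem_eq (measurable_snd (measurableSet_singleton z))
  have hjoint (x : 𝒳) (z : 𝒵) :
      μ (Z ⁻¹' {z} ∩ {ω | X ω = x}) = ν (Z' ⁻¹' {z} ∩ {ω | X' ω = x}) :=
    h.measure_mem_eq (s := Prod.snd ⁻¹' {z} ∩ Prod.fst ⁻¹' {x}) (Set.toFinite _).measurableSet
  simp only [condEntropy, entropy, measureReal_def,
    cond_apply (hZ (measurableSet_singleton _)), cond_apply (hZ' (measurableSet_singleton _)),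
    hfiber, hjoint]

end ConditionalEntropy

section MutualInformation

variable {Ω 𝒳 𝒵 : Type*} [MeasurableSpace Ω] {μ : Measure Ω}
  [Fintype 𝒳] [Fintype 𝒵] [MeasurableSpace 𝒵] [MeasurableSingletonClass 𝒵]
  {X : Ω → 𝒳} {Z : Ω → 𝒵}

open InformationTheory

lemma mutualInfo_eq_sum_mul_log [IsFiniteMeasure μ] (hZ : Measurable Z) :
    mutualInfo μ X Z = ∑ x, ∑ z, μ.real (X ⁻¹' {x} ∩ Z ⁻¹' {z}) *
      log (μ.real (X ⁻¹' {x} ∩ Z ⁻¹' {z}) / (μ.real (X ⁻¹' {x}) * μ.real (Z ⁻¹' {z}))) := by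
  have hentropy : entropy μ X =
      ∑ x, ∑ z, -(μ.real (X ⁻¹' {x} ∩ Z ⁻¹' {z}) * log (μ.real (X ⁻¹' {x}))) := by
    simp only [Finset.sum_neg_distrib, ← Finset.sum_mul, Set.inter_comm (X ⁻¹' _),
      sum_measureReal_fiber_inter hZ]
    simp only [← Finset.sum_neg_distrib, ← neg_mul]
    rfl
  have hcond : condEntropy μ X Z = ∑ x, ∑ z, -(μ.real (X ⁻¹' {x} ∩ Z ⁻¹' {z}) *
      log (μ[|Z ← z].real (X ⁻¹' {x}))) := by
    rw [Finset.sum_comm]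
    refine Finset.sum_congr rfl fun z _ => ?_
    rw [entropy, Finset.mul_sum]
    refine Finset.sum_congr rfl fun x _ => ?_
    rw [Set.inter_comm, ← measureReal_mul_cond_real (hZ (measurableSet_singleton z)), negMulLog,
      neg_mul, mul_neg, ← mul_assoc]
    rfl
  rw [mutualInfo, hentropy, hcond, ← Finset.sum_sub_distrib]
  refine Finset.sum_congr rfl fun x _ => ?_
  rw [← Finset.sum_sub_distrib]
  refine Finset.sum_congr rfl fun z _ => ?_
  rcases eq_or_ne (μ.real (X ⁻¹' {x} ∩ Z ⁻¹' {z})) 0 with hxz | hxz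
  · simp [hxz]
  · have hx : μ.real (X ⁻¹' {x}) ≠ 0 :=
      fun h => hxz (measureReal_mono_null Set.inter_subset_left h)
    have hjoint := measureReal_mul_cond_real (μ := μ) (hZ (measurableSet_singleton z)) (X ⁻¹' {x})
    rw [Set.inter_comm] at hjoint
    obtain ⟨hz, hx_cond⟩ := mul_ne_zero_iff.mp (hjoint ▸ hxz)
    nth_rw 4 [← hjoint]
    rw [mul_comm (μ.real (X ⁻¹' {x})), mul_div_mul_left _ _ hz, log_div hx_cond hx]
    ring

variable [MeasurableSpace 𝒳] [MeasurableSingletonClass 𝒳] [IsProbabilityMeasure μ]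

lemma mutualInfo_eq_sum_klDiv (hX : Measurable X) (hZ : Measurable Z) :
    mutualInfo μ X Z =
      ∑ x, μ.real (X ⁻¹' {x}) * (klDiv (μ[|X ← x].map Z) (μ.map Z)).toReal := by
  rw [mutualInfo_eq_sum_mul_log hZ]
  refine Finset.sum_congr rfl fun x _ => ?_
  have hXx := hX (measurableSet_singleton x)
  rcases eq_or_ne (μ (X ⁻¹' {x})) 0 with hx | hx
  · have hinter (z : 𝒵) : μ.real (X ⁻¹' {x} ∩ Z ⁻¹' {z}) = 0 :=
      measureReal_mono_null Set.inter_subset_left (by simp [measureReal_def, hx])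
    simp [hinter, measureReal_def, hx]
  · have : IsProbabilityMeasure μ[|X ← x] := cond_isProbabilityMeasure hx
    have := Measure.isProbabilityMeasure_map (μ := μ[|X ← x]) hZ.aemeasurable
    have := Measure.isProbabilityMeasure_map (μ := μ) hZ.aemeasurable
    rw [toReal_klDiv_eq_sum (cond_absolutelyContinuous.map hZ), Finset.mul_sum]
    refine Finset.sum_congr rfl fun z _ => ?_
    have hx' : μ.real (X ⁻¹' {x}) ≠ 0 := ENNReal.toReal_ne_zero.mpr ⟨hx, measure_ne_top μ _⟩
    rw [map_measureReal_apply hZ (measurableSet_singleton z),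
      map_measureReal_apply hZ (measurableSet_singleton z),
      ← measureReal_mul_cond_real hXx, mul_div_mul_left _ _ hx', mul_assoc]

lemma mul_toReal_klDiv_cond_le_mutualInfo (hX : Measurable X) (hZ : Measurable Z) (x : 𝒳) :
    μ.real (X ⁻¹' {x}) * (klDiv (μ[|X ← x].map Z) (μ.map Z)).toReal ≤ mutualInfo μ X Z := by
  rw [mutualInfo_eq_sum_klDiv hX hZ]
  exact Finset.single_le_sum
    (f := fun x => μ.real (X ⁻¹' {x}) * (klDiv (μ[|X ← x].map Z) (μ.map Z)).toReal)
    (fun _ _ => mul_nonneg measureReal_nonneg ENNReal.toReal_nonneg) (Finset.mem_univ x)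

lemma sq_measureReal_mul_integral_cond_sub_le_mutualInfo (hX : Measurable X) (hZ : Measurable Z)
    {f : 𝒵 → ℝ} {a b : ℝ} (hf : ∀ z, f z ∈ Set.Icc a b) (x : 𝒳) :
    (μ.real (X ⁻¹' {x}) * (∫ ω, f (Z ω) ∂μ[|X ← x] - ∫ ω, f (Z ω) ∂μ)) ^ 2 ≤
      (b - a) ^ 2 / 2 * (μ.real (X ⁻¹' {x}) * mutualInfo μ X Z) := by
  rcases eq_or_ne (μ (X ⁻¹' {x})) 0 with hx | hx
  · simp [measureReal_def, hx]
  have : IsProbabilityMeasure μ[|X ← x] := cond_isProbabilityMeasure hx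
  have := Measure.isProbabilityMeasure_map (μ := μ[|X ← x]) hZ.aemeasurable
  have := Measure.isProbabilityMeasure_map (μ := μ) hZ.aemeasurable
  have hfm : Measurable f := measurable_of_finite f
  have hpinsker := sq_integral_sub_integral_le_klDiv hfm hf <| klDiv_ne_top
    (cond_absolutelyContinuous (μ := μ) (s := X ⁻¹' {x}) |>.map hZ) .of_finite
  rw [integral_map hZ.aemeasurable hfm.aestronglyMeasurable,
    integral_map hZ.aemeasurable hfm.aestronglyMeasurable] at hpinsker
  calc (μ.real (X ⁻¹' {x}) * (∫ ω, f (Z ω) ∂μ[|X ← x] - ∫ ω, f (Z ω) ∂μ)) ^ 2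
      = μ.real (X ⁻¹' {x}) ^ 2 * (∫ ω, f (Z ω) ∂μ[|X ← x] - ∫ ω, f (Z ω) ∂μ) ^ 2 := mul_pow ..
    _ ≤ μ.real (X ⁻¹' {x}) ^ 2 *
        ((b - a) ^ 2 / 2 * (klDiv (μ[|X ← x].map Z) (μ.map Z)).toReal) := by gcongr
    _ = (b - a) ^ 2 / 2 * (μ.real (X ⁻¹' {x}) *
        (μ.real (X ⁻¹' {x}) * (klDiv (μ[|X ← x].map Z) (μ.map Z)).toReal)) := by ring
    _ ≤ (b - a) ^ 2 / 2 * (μ.real (X ⁻¹' {x}) * mutualInfo μ X Z) := by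
      gcongr
      exact mul_toReal_klDiv_cond_le_mutualInfo hX hZ x

end MutualInformation

section PosteriorSampling

variable {Ω 𝒳 𝒜 𝒴 : Type*} [MeasurableSpace Ω] {μ : Measure Ω}

/-- What the agent sees in one period: the action `A` together with the coordinate `Y_A` of the
outcome vector `Y` selected by it. -/
def observation (A : Ω → 𝒜) (Y : 𝒜 → Ω → 𝒴) (ω : Ω) : 𝒜 × 𝒴 :=
  (A ω, Y (A ω) ω)

variable [MeasurableSpace 𝒜] [MeasurableSpace 𝒴]

/-- The action `A` is a Thompson sample of the target action `Astar` under the current law `μ`: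
it has the law of `Astar`, but is drawn independently of `Astar` and of the outcome vector `Y`. -/
structure IsPosteriorSample (μ : Measure Ω) (A Astar : Ω → 𝒜) (Y : 𝒜 → Ω → 𝒴) : Prop where
  measure_fiber_eq (a : 𝒜) : μ (A ⁻¹' {a}) = μ (Astar ⁻¹' {a})
  indepFun : A ⟂ᵢ[μ] fun ω => (Astar ω, fun a => Y a ω)

variable [MeasurableSingletonClass 𝒜] {A Astar : Ω → 𝒜} {Y : 𝒜 → Ω → 𝒴}

lemma measurable_eval_comp [Countable 𝒜] (hA : Measurable A) (hY : ∀ a, Measurable (Y a)) :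
    Measurable fun ω => Y (A ω) ω :=
  (measurable_from_prod_countable_right (f := fun q : 𝒜 × Ω => Y q.1 q.2) hY).comp
    (hA.prodMk measurable_id)

lemma measurable_observation [Countable 𝒜] (hA : Measurable A) (hY : ∀ a, Measurable (Y a)) :
    Measurable (observation A Y) :=
  hA.prodMk (measurable_eval_comp hA hY)

lemma integrable_comp_eval [Countable 𝒜] [Finite 𝒴] [MeasurableSingletonClass 𝒴]
    [IsFiniteMeasure μ] (R : 𝒴 → ℝ) (hA : Measurable A) (hY : ∀ a, Measurable (Y a)) :
    Integrable (fun ω => R (Y (A ω) ω)) μ :=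
  Integrable.of_finite.comp_measurable (measurable_eval_comp hA hY)

variable [IsProbabilityMeasure μ] [Fintype 𝒜] [MeasurableSingletonClass 𝒴]

lemma mutualInfo_observation [Fintype 𝒴] [Fintype 𝒳] [MeasurableSpace 𝒳]
    [MeasurableSingletonClass 𝒳] {X : Ω → 𝒳} (hA : Measurable A) (hX : Measurable X)
    (hY : ∀ a, Measurable (Y a)) (h : A ⟂ᵢ[μ] fun ω => (X ω, fun a => Y a ω)) :
    mutualInfo μ X (observation A Y) = ∑ a, μ.real (A ⁻¹' {a}) * mutualInfo μ X (Y a) := by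
  have hcond (a : 𝒜) (ha : μ (A ⁻¹' {a}) ≠ 0) :
      condEntropy μ[|A ← a] X (fun ω => Y (A ω) ω) = condEntropy μ X (Y a) := by
    have hobserved : (fun ω => (X ω, Y a ω)) =ᵐ[μ[|A ← a]] fun ω => (X ω, Y (A ω) ω) :=
      ae_cond_of_forall_mem (hA (measurableSet_singleton a)) fun ω hω => by
        simp only [show A ω = a from hω]
    have hindep : IdentDistrib (fun ω => (X ω, Y a ω)) (fun ω => (X ω, Y a ω)) μ[|A ← a] μ :=
      identDistrib_cond_of_indepFun hA (hX.prodMk (hY a))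
        (h.comp measurable_id (measurable_fst.prodMk (measurable_snd.eval (a := a))))
        (measurableSet_singleton a) ha
    exact condEntropy_congr_of_identDistrib (measurable_eval_comp hA hY) (hY a)
      ((IdentDistrib.of_ae_eq (hX.prodMk (hY a)).aemeasurable hobserved).symm.trans hindep)
  simp only [mutualInfo, mul_sub, Finset.sum_sub_distrib, ← Finset.sum_mul,
    sum_measureReal_fiber hA, one_mul]
  congr 1
  refine (condEntropy_prodMk X hA (measurable_eval_comp hA hY)).trans
    (Finset.sum_congr rfl fun a _ => ?_)
  rcases eq_or_ne (μ (A ⁻¹' {a})) 0 with ha | ha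
  · simp [measureReal_def, ha]
  · rw [hcond a ha]

namespace IsPosteriorSample

lemma integral_regret_eq_sum [Finite 𝒴] (h : IsPosteriorSample μ A Astar Y) (hA : Measurable A)
    (hAstar : Measurable Astar) (hY : ∀ a, Measurable (Y a)) (R : 𝒴 → ℝ) :
    ∫ ω, (R (Y (Astar ω) ω) - R (Y (A ω) ω)) ∂μ = ∑ a, μ.real (Astar ⁻¹' {a}) *
      (∫ ω, R (Y a ω) ∂μ[|Astar ← a] - ∫ ω, R (Y a ω) ∂μ) := by
  have hindep (a : 𝒜) (ha : μ (A ⁻¹' {a}) ≠ 0) :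
      ∫ ω, R (Y a ω) ∂μ[|A ← a] = ∫ ω, R (Y a ω) ∂μ :=
    ((identDistrib_cond_of_indepFun hA (hY a)
      (h.indepFun.comp measurable_id (measurable_snd.eval (a := a)))
      (measurableSet_singleton a) ha).comp (measurable_of_finite R)).integral_eq
  rw [integral_sub (integrable_comp_eval R hAstar hY) (integrable_comp_eval R hA hY),
    integral_eval_eq_sum_cond hAstar (f := fun a ω => R (Y a ω)) (integrable_comp_eval R hAstar hY),
    integral_eval_eq_sum_cond hA (f := fun a ω => R (Y a ω)) (integrable_comp_eval R hA hY),
    ← Finset.sum_sub_distrib]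
  refine Finset.sum_congr rfl fun a _ => ?_
  rw [smul_eq_mul, smul_eq_mul, measureReal_def, measureReal_def, h.measure_fiber_eq a, mul_sub]
  rcases eq_or_ne (μ (Astar ⁻¹' {a})) 0 with ha | ha
  · simp [ha]
  · rw [hindep a (h.measure_fiber_eq a ▸ ha)]

/-- Probability matching puts the same weight `P(A* = a)` on the gain from `a` in the regret and on
the information `I(A*; Y_a)`, so Cauchy–Schwarz over the actions loses only the factor `|𝒜|`. -/
lemma sq_integral_regret_le [Fintype 𝒴] (h : IsPosteriorSample μ A Astar Y)
    (hA : Measurable A) (hAstar : Measurable Astar) (hY : ∀ a, Measurable (Y a))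
    {R : 𝒴 → ℝ} {b c : ℝ} (hR : ∀ y, R y ∈ Set.Icc b c) :
    (∫ ω, (R (Y (Astar ω) ω) - R (Y (A ω) ω)) ∂μ) ^ 2 ≤
      Fintype.card 𝒜 * ((c - b) ^ 2 / 2) * mutualInfo μ Astar (observation A Y) := by
  rw [h.integral_regret_eq_sum hA hAstar hY R, mutualInfo_observation hA hAstar hY h.indepFun,
    mul_assoc, Finset.mul_sum]
  refine sq_sum_le_card_mul_sum_sq.trans ?_
  refine mul_le_mul_of_nonneg_left (Finset.sum_le_sum fun a _ => ?_) (Nat.cast_nonneg _)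
  simp only [measureReal_def, h.measure_fiber_eq a]
  exact sq_measureReal_mul_integral_cond_sub_le_mutualInfo hAstar (hY a) hR a

end IsPosteriorSample

end PosteriorSampling

section InformationRatio

variable {Ω 𝒳 𝒵 : Type*}

/-- The tuple `(Z 0, …, Z (t - 1))` of everything observed before period `t`. -/
def history (Z : ℕ → Ω → 𝒵) (t : ℕ) (ω : Ω) : Fin t → 𝒵 :=
  fun s => Z s ω

variable [MeasurableSpace Ω] {μ : Measure Ω} {Z : ℕ → Ω → 𝒵}

lemma measurable_history [MeasurableSpace 𝒵] (hZ : ∀ t, Measurable (Z t)) (t : ℕ) :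
    Measurable (history Z t) :=
  measurable_pi_lambda _ fun s => hZ s

lemma condEntropy_history_succ [Fintype 𝒳] [Fintype 𝒵] (X : Ω → 𝒳) (t : ℕ) :
    condEntropy μ X (history Z (t + 1)) =
      condEntropy μ X (fun ω => (history Z t ω, Z t ω)) := by
  have hsnoc : history Z (t + 1) =
      (Equiv.prodComm _ _).trans (Fin.snocEquiv fun _ => 𝒵) ∘ fun ω => (history Z t ω, Z t ω) := by
    funext ω
    exact (Fin.snoc_init_self (history Z (t + 1) ω)).symm
  rw [hsnoc, condEntropy_equiv_comp]

variable [IsProbabilityMeasure μ] [Fintype 𝒳]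
  [Fintype 𝒵] [MeasurableSpace 𝒵] [MeasurableSingletonClass 𝒵]

lemma sq_integral_le_mul_condEntropy_sub {𝒲 : Type*} [Fintype 𝒲] [MeasurableSpace 𝒲]
    [MeasurableSingletonClass 𝒲] {X : Ω → 𝒳} {H : Ω → 𝒲} {W : Ω → 𝒵} (hH : Measurable H)
    (hW : Measurable W) {r : Ω → ℝ} (hr : Integrable r μ) {Γ : ℝ}
    (hΓ : ∀ h, μ (H ⁻¹' {h}) ≠ 0 →
      (∫ ω, r ω ∂μ[|H ← h]) ^ 2 ≤ Γ * mutualInfo μ[|H ← h] X W) :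
    (∫ ω, r ω ∂μ) ^ 2 ≤
      Γ * (condEntropy μ X H - condEntropy μ X (fun ω => (H ω, W ω))) :=
  calc (∫ ω, r ω ∂μ) ^ 2
      = (∑ h, μ.real (H ⁻¹' {h}) * ∫ ω, r ω ∂μ[|H ← h]) ^ 2 := by
        rw [integral_eq_sum_cond hH hr]
        simp only [smul_eq_mul]
    _ ≤ ∑ h, μ.real (H ⁻¹' {h}) * (∫ ω, r ω ∂μ[|H ← h]) ^ 2 :=
        Real.pow_arith_mean_le_arith_mean_pow_of_even _ _ _ (fun _ _ => measureReal_nonneg)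
          (sum_measureReal_fiber hH) even_two
    _ ≤ ∑ h, μ.real (H ⁻¹' {h}) * (Γ * mutualInfo μ[|H ← h] X W) := by
        refine Finset.sum_le_sum fun h _ => ?_
        rcases eq_or_ne (μ (H ⁻¹' {h})) 0 with hh | hh
        · simp [measureReal_def, hh]
        · exact mul_le_mul_of_nonneg_left (hΓ h hh) measureReal_nonneg
    _ = Γ * (condEntropy μ X H - condEntropy μ X (fun ω => (H ω, W ω))) := by
        rw [← sum_measureReal_mul_mutualInfo_cond X hH hW, Finset.mul_sum]
        exact Finset.sum_congr rfl fun h _ => mul_left_comm _ _ _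

lemma sum_integral_le_sqrt_mul_entropy {X : Ω → 𝒳} (hZ : ∀ t, Measurable (Z t))
    {r : ℕ → Ω → ℝ} (hr : ∀ t, Integrable (r t) μ) {Γ : ℝ} (hΓ0 : 0 ≤ Γ)
    (hΓ : ∀ t h, μ (history Z t ⁻¹' {h}) ≠ 0 →
      (∫ ω, r t ω ∂μ[|history Z t ← h]) ^ 2 ≤ Γ * mutualInfo μ[|history Z t ← h] X (Z t)) (T : ℕ) :
    ∑ t ∈ Finset.range T, ∫ ω, r t ω ∂μ ≤ √(Γ * entropy μ X * T) := by
  have hstep (t : ℕ) : (∫ ω, r t ω ∂μ) ^ 2 ≤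
      Γ * (condEntropy μ X (history Z t) - condEntropy μ X (history Z (t + 1))) := by
    rw [condEntropy_history_succ]
    exact sq_integral_le_mul_condEntropy_sub (measurable_history hZ t) (hZ t) (hr t) (hΓ t)
  refine Real.le_sqrt_of_sq_le ?_
  calc (∑ t ∈ Finset.range T, ∫ ω, r t ω ∂μ) ^ 2
      ≤ T * ∑ t ∈ Finset.range T, (∫ ω, r t ω ∂μ) ^ 2 := by
        simpa using sq_sum_le_card_mul_sum_sq (s := Finset.range T) (f := fun t => ∫ ω, r t ω ∂μ)
    _ ≤ T * ∑ t ∈ Finset.range T,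
          Γ * (condEntropy μ X (history Z t) - condEntropy μ X (history Z (t + 1))) := by
        gcongr with t
        exact hstep t
    _ = T * (Γ * (entropy μ X - condEntropy μ X (history Z T))) := by
        rw [← Finset.mul_sum, Finset.sum_range_sub', condEntropy_of_unique]
    _ ≤ T * (Γ * entropy μ X) := by
        gcongr
        exact sub_le_self _ (condEntropy_nonneg X _)
    _ = Γ * entropy μ X * T := mul_comm _ _

end InformationRatio

section ThompsonSampling

variable {Ω 𝒜 𝒴 : Type*}

lemma preimage_history_observation (A : ℕ → Ω → 𝒜) (Y : ℕ → 𝒜 → Ω → 𝒴) (t : ℕ)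
    (h : Fin t → 𝒜 × 𝒴) :
    history (fun s => observation (A s) (Y s)) t ⁻¹' {h} =
      {ω | ∀ s : Fin t, A s ω = (h s).1 ∧ Y s (h s).1 ω = (h s).2} := by
  ext ω
  simp only [Set.mem_preimage, Set.mem_singleton_iff, funext_iff, history, observation,
    Prod.ext_iff, Set.mem_ofPred_eq]
  exact forall_congr' fun s => and_congr_right fun hs => by rw [hs]

theorem thompson_sampling_regret_le_worst_case_general [MeasurableSpace Ω] {μ : Measure Ω}
    [IsProbabilityMeasure μ] [Fintype 𝒜] [MeasurableSpace 𝒜] [MeasurableSingletonClass 𝒜]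
    [Finite 𝒴] [MeasurableSpace 𝒴] [MeasurableSingletonClass 𝒴] (R : 𝒴 → ℝ)
    {Y : ℕ → 𝒜 → Ω → 𝒴} (hY : ∀ t a, Measurable (Y t a))
    {Astar : Ω → 𝒜} (hAstar : Measurable Astar) {A : ℕ → Ω → 𝒜} (hA : ∀ t, Measurable (A t))
    (hTS : ∀ t h, μ (history (fun s => observation (A s) (Y s)) t ⁻¹' {h}) ≠ 0 →
      IsPosteriorSample μ[|history (fun s => observation (A s) (Y s)) t ← h] (A t) Astar (Y t))
    (T : ℕ) :
    ∑ t ∈ Finset.range T, ∫ ω, (R (Y t (Astar ω) ω) - R (Y t (A t ω) ω)) ∂μ ≤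
      ((⨆ y, R y) - ⨅ y, R y) * √(Fintype.card 𝒜 * entropy μ Astar * T / 2) := by
  have := Fintype.ofFinite 𝒴
  have hR (y : 𝒴) : R y ∈ Set.Icc (⨅ y, R y) (⨆ y, R y) :=
    ⟨ciInf_le (Set.finite_range R).bddBelow y, le_ciSup (Set.finite_range R).bddAbove y⟩
  obtain ⟨ω₀⟩ := nonempty_of_isProbabilityMeasure μ
  have hwidth : 0 ≤ (⨆ y, R y) - ⨅ y, R y := sub_nonneg.mpr <|
    (hR (Y 0 (A 0 ω₀) ω₀)).1.trans (hR (Y 0 (A 0 ω₀) ω₀)).2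
  refine (sum_integral_le_sqrt_mul_entropy (X := Astar)
    (fun t => measurable_observation (hA t) (hY t))
    (fun t => (integrable_comp_eval R hAstar (hY t)).sub (integrable_comp_eval R (hA t) (hY t)))
    (Γ := Fintype.card 𝒜 * (((⨆ y, R y) - ⨅ y, R y) ^ 2 / 2)) (by positivity)
    (fun t h hh => ?_) T).trans_eq ?_
  · have : IsProbabilityMeasure μ[|history (fun s => observation (A s) (Y s)) t ← h] :=
      cond_isProbabilityMeasure hh
    exact (hTS t h hh).sq_integral_regret_le (hA t) hAstar (hY t) hR
  · rw [show Fintype.card 𝒜 * (((⨆ y, R y) - ⨅ y, R y) ^ 2 / 2) * entropy μ Astar * T =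
      ((⨆ y, R y) - ⨅ y, R y) ^ 2 * (Fintype.card 𝒜 * entropy μ Astar * T / 2) by ring,
      sqrt_mul (sq_nonneg _), sqrt_sq hwidth]

end ThompsonSampling

/-- **Worst-case regret bound for Thompson sampling**: combining Proposition 1
with Proposition 3 yields
`Σ_{t<T} E[R(Y_{t,A*}) − R(Y_{t,A_t})] ≤ √(|𝒜| · H(A*) · T / 2)`.

Setup: `θ*` is a random parameter in a finite set `Θ`; given `θ* = θ` the
outcome vectors `(Y_t)` are i.i.d. with law `p θ`; `A*` is a `σ(θ*)`-measurable
optimal action; and at every period `t`, conditioned on any positive-probability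
history `(A_0, Y_{0,A_0}, …, A_{t-1}, Y_{t-1,A_{t-1}})`, the action `A_t` is
independent of `(θ*, Y_t)` and is distributed as the posterior distribution of
`A*` (Thompson sampling). -/
theorem thompson_sampling_regret_le_worst_case
    {Ω : Type*} [MeasurableSpace Ω] (μ : Measure Ω) [IsProbabilityMeasure μ]
    {𝒜 𝒴 Θ : Type*} [Fintype 𝒜] [Nonempty 𝒜] [Fintype 𝒴] [Nonempty 𝒴]
    [Fintype Θ] [Nonempty Θ]
    [MeasurableSpace 𝒜] [MeasurableSingletonClass 𝒜]
    [MeasurableSpace 𝒴] [MeasurableSingletonClass 𝒴]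
    [MeasurableSpace Θ] [MeasurableSingletonClass Θ]
    (R : 𝒴 → ℝ) (hR : (⨆ y, R y) - (⨅ y, R y) ≤ 1)
    (θstar : Ω → Θ) (hθstarMeas : Measurable θstar)
    (p : Θ → PMF (𝒜 → 𝒴))
    (Y : ℕ → 𝒜 → Ω → 𝒴) (hYmeas : ∀ t a, Measurable (Y t a))
    -- conditionally i.i.d. given `θ*`, with conditional law `p θ*`
    (hiid : ∀ θ : Θ, μ {ω | θstar ω = θ} ≠ 0 →
      ∀ (s : Finset ℕ) (f : ℕ → 𝒜 → 𝒴),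
        (μ[|{ω | θstar ω = θ}]) {ω | ∀ t ∈ s, (fun a => Y t a ω) = f t} =
          ∏ t ∈ s, p θ (f t))
    (Astar : Ω → 𝒜)
    -- `A*` is `σ(θ*)`-measurable
    (hAstarFn : ∃ g : Θ → 𝒜, ∀ ω, Astar ω = g (θstar ω))
    -- `A*` maximizes `E[R(Y_{1,a}) | θ*]`
    (hopt : ∀ θ : Θ, μ {ω | θstar ω = θ} ≠ 0 → ∀ ω ∈ {ω | θstar ω = θ},
      ∀ a : 𝒜,
        ∫ ω', R (Y 0 a ω') ∂(μ[|{ω' | θstar ω' = θ}]) ≤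
          ∫ ω', R (Y 0 (Astar ω) ω') ∂(μ[|{ω' | θstar ω' = θ}]))
    (A : ℕ → Ω → 𝒜) (hAmeas : ∀ t, Measurable (A t))
    -- Thompson sampling: conditioned on every positive-probability history,
    -- `A_t` is independent of `(θ*, Y_t)` and distributed as `A*`
    (hTS : ∀ (t : ℕ) (h : Fin t → 𝒜 × 𝒴),
      μ {ω | ∀ s : Fin t,
          A (s : ℕ) ω = (h s).1 ∧ Y (s : ℕ) ((h s).1) ω = (h s).2} ≠ 0 →
        (∀ a : 𝒜,
          (μ[|{ω | ∀ s : Fin t,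
              A (s : ℕ) ω = (h s).1 ∧ Y (s : ℕ) ((h s).1) ω = (h s).2}])
              {ω | A t ω = a} =
            (μ[|{ω | ∀ s : Fin t,
                A (s : ℕ) ω = (h s).1 ∧ Y (s : ℕ) ((h s).1) ω = (h s).2}])
              {ω | Astar ω = a}) ∧
        IndepFun (A t) (fun ω => (θstar ω, fun a => Y t a ω))
          (μ[|{ω | ∀ s : Fin t,
              A (s : ℕ) ω = (h s).1 ∧ Y (s : ℕ) ((h s).1) ω = (h s).2}]))
    (T : ℕ) :
    ∑ t ∈ Finset.range T,
        ∫ ω, (R (Y t (Astar ω) ω) - R (Y t (A t ω) ω)) ∂μ ≤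
      Real.sqrt ((Fintype.card 𝒜 : ℝ) * entropy μ Astar * T / 2) := by
  obtain ⟨g, hg⟩ := hAstarFn
  have hAstar : Measurable Astar := funext hg ▸ (measurable_of_finite g).comp hθstarMeas
  refine (thompson_sampling_regret_le_worst_case_general R hYmeas hAstar hAmeas
    (fun t h => ?_) T).trans (mul_le_of_le_one_left (sqrt_nonneg _) hR)
  rw [preimage_history_observation]
  intro hh
  obtain ⟨hmatch, hindep⟩ := hTS t h hh
  refine ⟨hmatch, ?_⟩
  simpa only [Function.comp_def, id, ← hg] using
    hindep.comp measurable_id (((measurable_of_finite g).comp measurable_fst).prodMk measurable_snd)
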